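/- arXiv:1405.1716 — 5 statements merged into one kernel-verified Lean document; each statement's English description precedes it below -/
import Mathlib

section
/- Let χ ∈ ℝ, r > 0, and let θ, h₀ : ℝ → ℝ be differentiable functions such that the functions h₁ = r·cos θ, h₂ = r·sin θ together with h₀ satisfy the vertical subsystem h₁' = h₂·h₀, h₂' = −h₁·h₀, h₀' = 2χ·h₁·h₂ on ℝ. Then θ' = −h₀ and h₀' = χ·r²·sin(2θ) on ℝ; consequently the functions γ = 2θ and c = −2h₀ satisfy the pendulum equation γ' = c, c' = −2χ·r²·sin γ. -/
/-!
The chain rule turns the first two equations into `r * sin θ * (θ' + h₀) = 0` and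
`r * cos θ * (θ' + h₀) = 0`. As `sin² θ + cos² θ = 1` and `r ≠ 0`, the common factor `θ' + h₀`
vanishes. The equation for `h₀` is the double-angle formula, and the pendulum equation follows
by rescaling both functions.
-/

/-- In polar coordinates `h₁ = r·cos θ`, `h₂ = r·sin θ`, the vertical subsystem
`h₁' = h₂·h₀`, `h₂' = −h₁·h₀`, `h₀' = 2χ·h₁·h₂` reduces to `θ' = −h₀`,
`h₀' = χ·r²·sin(2θ)`, and hence `γ = 2θ`, `c = −2h₀` satisfy the pendulum equation
`γ' = c`, `c' = −2χ·r²·sin γ`. -/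
theorem vertical_subsystem_reduces_to_pendulum
    (χ r : ℝ) (hr : 0 < r) (θ h₀ : ℝ → ℝ)
    (hθdiff : Differentiable ℝ θ) (h₀diff : Differentiable ℝ h₀)
    (hd1 : ∀ t : ℝ, HasDerivAt (fun u => r * Real.cos (θ u))
      ((r * Real.sin (θ t)) * h₀ t) t)
    (hd2 : ∀ t : ℝ, HasDerivAt (fun u => r * Real.sin (θ u))
      (-((r * Real.cos (θ t)) * h₀ t)) t)
    (hd0 : ∀ t : ℝ, HasDerivAt h₀
      (2 * χ * (r * Real.cos (θ t)) * (r * Real.sin (θ t))) t) :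
    (∀ t : ℝ, HasDerivAt θ (-(h₀ t)) t) ∧
    (∀ t : ℝ, HasDerivAt h₀ (χ * r ^ 2 * Real.sin (2 * θ t)) t) ∧
    (∀ t : ℝ, HasDerivAt (fun u => 2 * θ u) (-2 * h₀ t) t) ∧
    (∀ t : ℝ, HasDerivAt (fun u => -2 * h₀ u)
      (-(2 * χ * r ^ 2 * Real.sin (2 * θ t))) t) := by
  have hθ : ∀ t : ℝ, HasDerivAt θ (-(h₀ t)) t := by
    intro t
    have hd := (hθdiff t).hasDerivAt
    have e1 := (hd.cos.const_mul r).unique (hd1 t)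
    have e2 := (hd.sin.const_mul r).unique (hd2 t)
    -- Neither equation alone determines `θ'`, since `sin θ` or `cos θ` may vanish;
    -- the combination `-sin θ * e1 + cos θ * e2` gives `r * (θ' + h₀) = 0` at every point.
    have e : r * (deriv θ t + h₀ t) = 0 := by
      linear_combination (-Real.sin (θ t)) * e1 + Real.cos (θ t) * e2
        - r * (deriv θ t + h₀ t) * Real.sin_sq_add_cos_sq (θ t)
    have e' := (mul_eq_zero.mp e).resolve_left hr.ne'
    rwa [eq_neg_of_add_eq_zero_left e'] at hd
  have hh : ∀ t : ℝ, HasDerivAt h₀ (χ * r ^ 2 * Real.sin (2 * θ t)) t := by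
    intro t
    convert hd0 t using 1
    rw [Real.sin_two_mul]
    ring
  refine ⟨hθ, hh, fun t => ?_, fun t => ?_⟩
  · refine ((hθ t).const_mul 2).congr_deriv ?_
    ring
  · refine ((hh t).const_mul (-2)).congr_deriv ?_
    ring
end

section
/- Let χ, κ ∈ ℝ and consider the Lie–Poisson bracket on ℝ³ with coordinates (h₀, h₁, h₂) defined for differentiable functions f, g : ℝ³ → ℝ by {f, g}(h) = h₀(∂₂f·∂₁g − ∂₁f·∂₂g) + (χ+κ)h₂(∂₁f·∂₀g − ∂₀f·∂₁g) + (χ−κ)h₁(∂₂f·∂₀g − ∂₀f·∂₂g). Then the Hamiltonian H(h) = (h₁² + h₂²)/2 and the pendulum energy E(h) = 2h₀² − 2χ(h₁² − h₂²) are in involution: {H, E}(h) = 0 for every h ∈ ℝ³. -/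
/-! With `∇H = (0, h₁, h₂)` and `∇E = (4h₀, -4χh₁, 4χh₂)`, the three terms of `{H, E}` are
`-8χ h₀h₁h₂`, `4(χ + κ) h₀h₁h₂` and `4(χ - κ) h₀h₁h₂`, whose sum vanishes. -/

/-- Partial derivative of `f : ℝ³ → ℝ` with respect to the `i`-th coordinate. -/
noncomputable def partialDeriv3 (i : Fin 3) (f : (Fin 3 → ℝ) → ℝ) (h : Fin 3 → ℝ) : ℝ :=
  fderiv ℝ f h (Pi.single i 1)

/-- The Lie–Poisson bracket on ℝ³ (coordinates `(h₀, h₁, h₂)`) associated with a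
3D unimodular Lie algebra with invariants `χ`, `κ`. -/
noncomputable def liePoissonBracket (χ κ : ℝ) (f g : (Fin 3 → ℝ) → ℝ)
    (h : Fin 3 → ℝ) : ℝ :=
  h 0 * (partialDeriv3 2 f h * partialDeriv3 1 g h -
          partialDeriv3 1 f h * partialDeriv3 2 g h)
  + (χ + κ) * h 2 * (partialDeriv3 1 f h * partialDeriv3 0 g h -
          partialDeriv3 0 f h * partialDeriv3 1 g h)
  + (χ - κ) * h 1 * (partialDeriv3 2 f h * partialDeriv3 0 g h -
          partialDeriv3 0 f h * partialDeriv3 2 g h)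

/-- A partial derivative is the derivative along the corresponding coordinate of the total
derivative, which can be read off from any witness of Fréchet differentiability. -/
theorem partialDeriv3_eq {f : (Fin 3 → ℝ) → ℝ} {h : Fin 3 → ℝ} {L : (Fin 3 → ℝ) →L[ℝ] ℝ}
    (hf : HasFDerivAt f L h) (i : Fin 3) : partialDeriv3 i f h = L (Pi.single i 1) := by
  rw [partialDeriv3, hf.fderiv]

/-- The Hamiltonian `H = (h₁² + h₂²)/2` and the pendulum energy
`E = 2h₀² − 2χ(h₁² − h₂²)` are in involution: `{H, E} = 0`. -/
theorem hamiltonian_energy_in_involution (χ κ : ℝ) :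
    ∀ h : Fin 3 → ℝ,
      liePoissonBracket χ κ
        (fun h => (h 1 ^ 2 + h 2 ^ 2) / 2)
        (fun h => 2 * h 0 ^ 2 - 2 * χ * (h 1 ^ 2 - h 2 ^ 2)) h = 0 := by
  intro h
  have hc (i : Fin 3) : HasFDerivAt (fun x : Fin 3 → ℝ => x i)
      (ContinuousLinearMap.proj (R := ℝ) (φ := fun _ : Fin 3 => ℝ) i) h := hasFDerivAt_apply i h
  have hH := (((hc 1).pow 2).add ((hc 2).pow 2)).mul_const (2⁻¹ : ℝ)
  have hE := (((hc 0).pow 2).const_mul 2).sub ((((hc 1).pow 2).sub ((hc 2).pow 2)).const_mul (2 * χ))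
  have pH (i : Fin 3) := partialDeriv3_eq (f := fun h => (h 1 ^ 2 + h 2 ^ 2) / 2) hH i
  have pE (i : Fin 3) := partialDeriv3_eq
    (f := fun h => 2 * h 0 ^ 2 - 2 * χ * (h 1 ^ 2 - h 2 ^ 2)) hE i
  -- `∇H = (0, h₁, h₂)` and `∇E = (4h₀, -4χh₁, 4χh₂)`
  simp only [liePoissonBracket, pH, pE]
  simp
  ring
end

section
/- Let χ ∈ ℝ and α₀, α₁, α₂ ∈ ℝ. Assume either (i) χ ≠ 0 and (α₀, α₁, α₂) ≠ (0, 0, 0), or (ii) χ = 0 and α₁² + α₂² ≠ 0. Then the set { (h₀, h₁, h₂) ∈ ℝ³ : 2χα₀h₁h₂ + α₁h₀h₂ − α₂h₀h₁ ≠ 0 } is open and dense in ℝ³. Equivalently, the gradients with respect to (h₀, h₁, h₂) of the three functions H = (h₁² + h₂²)/2, E = 2h₀² − 2χ(h₁² − h₂²), and g = α₀h₀ + α₁h₁ + α₂h₂ are linearly independent at every point of an open dense subset of ℝ³. -/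
/-!
The Jacobian determinant is a quadratic form in `(h₀, h₁, h₂)` which is not identically zero under
the hypotheses: it takes the values `2χα₀`, `α₁`, `-α₂` at `(0, 1, 1)`, `(1, 0, 1)`, `(1, 1, 0)`.
If it does not vanish at `q`, then along any line `t ↦ p + t q` it is a polynomial in `t` with
nonzero leading coefficient, so it has finitely many zeros there and `p` is a limit of points where
it is nonzero (`dense_quadratic_ne_zero`). The determinant of the matrix of gradients
is four times this form, whence linear independence.
-/

/-- The quadratic form `k bc + m ac - n ab` on `ℝ³` is nonzero on a dense set as soon as it is
nonzero at one point `q`. -/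
lemma dense_quadratic_ne_zero (k m n : ℝ) (q : ℝ × ℝ × ℝ)
    (hq : k * q.2.1 * q.2.2 + m * q.1 * q.2.2 - n * q.1 * q.2.1 ≠ 0) :
    Dense {p : ℝ × ℝ × ℝ | k * p.2.1 * p.2.2 + m * p.1 * p.2.2 - n * p.1 * p.2.1 ≠ 0} := by
  intro p
  -- The restriction of the form to the line `t ↦ p + t q`; its coefficient of `t ^ 2` is the
  -- value of the form at `q`.
  let P : Polynomial ℝ :=
    .C (k * q.2.1 * q.2.2 + m * q.1 * q.2.2 - n * q.1 * q.2.1) * .X ^ 2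
      + .C (k * (p.2.1 * q.2.2 + q.2.1 * p.2.2) + m * (p.1 * q.2.2 + q.1 * p.2.2)
          - n * (p.1 * q.2.1 + q.1 * p.2.1)) * .X
      + .C (k * p.2.1 * p.2.2 + m * p.1 * p.2.2 - n * p.1 * p.2.1)
  have hP : P ≠ 0 := by
    intro h
    apply hq
    have h2 := congrArg (Polynomial.coeff · 2) h
    simpa only [P, Polynomial.coeff_add, Polynomial.coeff_C_mul, Polynomial.coeff_X_pow,
      Polynomial.coeff_X, Polynomial.coeff_C, Polynomial.coeff_zero, if_true, mul_one,
      OfNat.ofNat_ne_zero, OfNat.one_ne_ofNat, if_false, mul_zero, add_zero] using h2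
  have hdense : Dense {t : ℝ | P.IsRoot t}ᶜ := 
    (Polynomial.finite_setOfPred_isRoot hP).countable.dense_compl ℝ
  have hline : Continuous fun t : ℝ => p + t • q := by fun_prop
  have hmem := map_mem_closure hline (hdense 0)
    (t := {p : ℝ × ℝ × ℝ | k * p.2.1 * p.2.2 + m * p.1 * p.2.2 - n * p.1 * p.2.1 ≠ 0}) (by
      intro t ht h0
      apply ht
      simp only [Prod.fst_add, Prod.snd_add, Prod.smul_fst, Prod.smul_snd, smul_eq_mul] at h0
      simp only [Set.mem_ofPred_eq, Polynomial.IsRoot.def, P, Polynomial.eval_add,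
        Polynomial.eval_mul, Polynomial.eval_C, Polynomial.eval_pow, Polynomial.eval_X]
      linear_combination h0)
  simpa using hmem

/-- Liouville integrability: under the stated conditions on `χ` and `(α₀, α₁, α₂)`, the
set where the Jacobian determinant `2χα₀h₁h₂ + α₁h₀h₂ − α₂h₀h₁` of `(H, E/4, g)` is
nonzero is open and dense in ℝ³; equivalently the gradients of `H = (h₁² + h₂²)/2`,
`E = 2h₀² − 2χ(h₁² − h₂²)` and `g = α₀h₀ + α₁h₁ + α₂h₂` are linearly independent
on that open dense set. -/
theorem integrals_independent_on_open_dense (χ α₀ α₁ α₂ : ℝ)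
    (hcase : (χ ≠ 0 ∧ (α₀, α₁, α₂) ≠ (0, 0, 0)) ∨ (χ = 0 ∧ α₁ ^ 2 + α₂ ^ 2 ≠ 0)) :
    (IsOpen {p : ℝ × ℝ × ℝ |
        2 * χ * α₀ * p.2.1 * p.2.2 + α₁ * p.1 * p.2.2 - α₂ * p.1 * p.2.1 ≠ 0} ∧
     Dense {p : ℝ × ℝ × ℝ |
        2 * χ * α₀ * p.2.1 * p.2.2 + α₁ * p.1 * p.2.2 - α₂ * p.1 * p.2.1 ≠ 0}) ∧
    ∀ p : ℝ × ℝ × ℝ,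
      p ∈ {p : ℝ × ℝ × ℝ |
        2 * χ * α₀ * p.2.1 * p.2.2 + α₁ * p.1 * p.2.2 - α₂ * p.1 * p.2.1 ≠ 0} →
      LinearIndependent ℝ
        ![![(0 : ℝ), p.2.1, p.2.2],
          ![4 * p.1, -(4 * χ) * p.2.1, 4 * χ * p.2.2],
          ![α₀, α₁, α₂]] := by
  refine ⟨⟨?_, ?_⟩, ?_⟩
  · exact isOpen_ne_fun (by fun_prop) continuous_const
  · by_cases h1 : α₁ = 0
    · by_cases h2 : α₂ = 0
      · -- Only case (i) survives, with `α₀ ≠ 0`.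
        have hk : 2 * χ * α₀ ≠ 0 := by
          rcases hcase with ⟨hχ, hα⟩ | ⟨_, hα⟩
          · have h0 : α₀ ≠ 0 := by
              rintro rfl
              exact hα (by rw [h1, h2])
            exact mul_ne_zero (mul_ne_zero two_ne_zero hχ) h0
          · exact absurd (by rw [h1, h2]; ring) hα
        exact dense_quadratic_ne_zero _ _ _ (0, 1, 1) (by simpa using hk)
      · exact dense_quadratic_ne_zero _ _ _ (1, 1, 0) (by simpa using h2)
    · exact dense_quadratic_ne_zero _ _ _ (1, 0, 1) (by simpa using h1)
  · intro p hp
    refine Matrix.linearIndependent_rows_of_det_ne_zero (A := Matrix.of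
        ![![(0 : ℝ), p.2.1, p.2.2],
          ![4 * p.1, -(4 * χ) * p.2.1, 4 * χ * p.2.2],
          ![α₀, α₁, α₂]]) ?_
    intro hdet
    apply hp
    simp [Matrix.det_fin_three] at hdet
    linear_combination hdet / 4
end

section
/- Let χ, κ ∈ ℝ and (h₀, h₁, h₂) ∈ ℝ³. Consider the 5×6 real matrix J whose rows are R₁ = (0, h₁, h₂, 0, 0, 0), R₂ = (h₀, −χh₁, χh₂, 0, 0, 0), R₃ = (−1, 0, 0, 0, (χ+κ)h₂, (χ−κ)h₁), R₄ = (0, −1, 0, −(χ+κ)h₂, 0, h₀), R₅ = (0, 0, −1, (κ−χ)h₁, −h₀, 0). Then the rows satisfy the linear relation κ·R₁ + R₂ + h₀·R₃ + (κ−χ)h₁·R₄ + (κ+χ)h₂·R₅ = 0; consequently the rank of J is at most 4. -/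
/-! The linear relation is checked coordinate by coordinate. It says that
`(κ, 1, h₀, (κ - χ) h₁, (κ + χ) h₂)` is a left null vector of `J`. This vector is nonzero, because
its second entry is `1`, so the five rows are linearly dependent and the rank is at most `4`
(`rank_le_of_vecMul_eq_zero`). -/

/-- A nonzero left null vector of a matrix with `n + 1` rows bounds its rank by `n`. -/
theorem rank_le_of_vecMul_eq_zero {n m : ℕ} (A : Matrix (Fin (n + 1)) (Fin m) ℝ)
    (v : Fin (n + 1) → ℝ) (hv : v ≠ 0) (h : Matrix.vecMul v A = 0) : A.rank ≤ n := by
  by_contra! hlt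
  have hrank : A.rank = n + 1 := le_antisymm A.rank_le_height hlt
  -- If the rank were `n + 1`, the rows would be linearly independent.
  have hli : LinearIndependent ℝ A.row := by
    rw [linearIndependent_iff_card_eq_finrank_span, Set.finrank,
      ← Matrix.rank_eq_finrank_span_row, hrank, Fintype.card_fin]
  exact hv (Matrix.vecMul_injective_iff.2 hli (by simpa using h))


/-- The rows of the 5×6 Jacobian matrix `J` of the five integrals `H, E/4, g₀, g₁, g₂`
satisfy the linear relation `κR₁ + R₂ + h₀R₃ + (κ−χ)h₁R₄ + (κ+χ)h₂R₅ = 0`, hence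
`rank J ≤ 4`. -/
theorem jacobian_rows_dependent (χ κ h₀ h₁ h₂ : ℝ) :
    (κ • ![(0 : ℝ), h₁, h₂, 0, 0, 0]
      + ![h₀, -χ * h₁, χ * h₂, 0, 0, 0]
      + h₀ • ![(-1 : ℝ), 0, 0, 0, (χ + κ) * h₂, (χ - κ) * h₁]
      + ((κ - χ) * h₁) • ![(0 : ℝ), -1, 0, -((χ + κ) * h₂), 0, h₀]
      + ((κ + χ) * h₂) • ![(0 : ℝ), 0, -1, (κ - χ) * h₁, -h₀, 0]) = 0 ∧
    Matrix.rank !![(0 : ℝ), h₁, h₂, 0, 0, 0;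
                   h₀, -χ * h₁, χ * h₂, 0, 0, 0;
                   -1, 0, 0, 0, (χ + κ) * h₂, (χ - κ) * h₁;
                   0, -1, 0, -((χ + κ) * h₂), 0, h₀;
                   0, 0, -1, (κ - χ) * h₁, -h₀, 0] ≤ 4 := by
  refine ⟨?_, ?_⟩
  · ext i
    fin_cases i <;> simp <;> ring
  · refine rank_le_of_vecMul_eq_zero _ ![κ, 1, h₀, (κ - χ) * h₁, (κ + χ) * h₂] ?_ ?_
    -- The coefficient of the second row is `1`, so the relation is nontrivial for all parameters.
    · intro h
      simpa using congrFun h 1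
    · ext i
      fin_cases i <;> simp [Matrix.vecMul, dotProduct, Fin.sum_univ_succ] <;> ring
end

section
/- Let χ, κ ∈ ℝ and (h₀, h₁, h₂) ∈ ℝ³ with h₀·h₁ ≠ 0. Then the 4×6 real matrix with rows (0, h₁, h₂, 0, 0, 0), (−1, 0, 0, 0, (χ+κ)h₂, (χ−κ)h₁), (0, −1, 0, −(χ+κ)h₂, 0, h₀), (0, 0, −1, (κ−χ)h₁, −h₀, 0) has rank exactly 4. -/
/-- Where `h₀h₁ ≠ 0`, the 4×6 Jacobian matrix of the integrals `H, g₀, g₁, g₂`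
has full rank 4. -/
theorem jacobian_four_integrals_full_rank (χ κ h₀ h₁ h₂ : ℝ) (hne : h₀ * h₁ ≠ 0) :
    Matrix.rank !![(0 : ℝ), h₁, h₂, 0, 0, 0;
                   -1, 0, 0, 0, (χ + κ) * h₂, (χ - κ) * h₁;
                   0, -1, 0, -((χ + κ) * h₂), 0, h₀;
                   0, 0, -1, (κ - χ) * h₁, -h₀, 0] = 4 := by
  -- The rows are independent: in a vanishing combination `c`, the first three columns give
  -- `c 1 = 0`, `c 2 = c 0 * h₁`, `c 3 = c 0 * h₂`, and then the last one gives `c 0 * h₀h₁ = 0`.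
  refine (LinearIndependent.rank_matrix ?_).trans (Fintype.card_fin 4)
  rw [Fintype.linearIndependent_iff]
  intro c hc
  have e0 := congrFun hc 0
  have e1 := congrFun hc 1
  have e2 := congrFun hc 2
  have e5 := congrFun hc 5
  simp [Fin.sum_univ_four, Matrix.row] at e0 e1 e2 e5
  have h0 : c 0 = 0 := by
    have : c 0 * (h₀ * h₁) = 0 := by
      linear_combination e5 + h₀ * e1 - (χ - κ) * h₁ * e0
    exact (mul_eq_zero.mp this).resolve_right hne
  have h2 : c 2 = 0 := by linear_combination h₁ * h0 - e1
  have h3 : c 3 = 0 := by linear_combination h₂ * h0 - e2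
  intro i
  fin_cases i
  exacts [h0, e0, h2, h3]
end
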